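/- Define rational numbers ε_i := (q_i + q̄_i)/d − 1 for 0 ≤ i ≤ n+1 (so ε_0 = ε_{n+1} = 0). Then for every 1 ≤ j ≤ n one has ε_{j−1} + ε_{j+1} − c_j·ε_j = c_j − 2. (This expresses that the discrepancy divisor of the Hirzebruch–Jung resolution of X(d;1,q) is Σ_i ((q_i + q̄_i)/d − 1)·E_i, where the intersection matrix is tridiagonal with diagonal entries −c_i and off-diagonal entries 1.) -/

import Mathlib

/-!
The `q_i` satisfy `q_{i-1} + q_{i+1} = c_i q_i`, so the claim amounts to the same recurrence for
the `q̄_i`. Let `p_i` solve it with `p_0 = 0`, `p_1 = 1`. Since `c_i ≥ 2`, the `p_i` increase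
strictly, and the Casoratian `p_{i+1} q_i - p_i q_{i+1}` has the constant value `d`, so
`p_{n+1} = d`. The sequences `q p_i` and `q_i` satisfy the same recurrence and agree modulo `d` for
`i = 0, 1`, hence always; at `i = n` this exhibits `q` as a unit modulo `d`. Thus, for `1 ≤ i ≤ n`,
`p_i` is the only solution of `q t ≡ q_i (mod d)` with `0 < t < d`, which gives `q̄_i = p_i`.
-/

section Continuant

variable {R : Type*} [CommRing R]

/-- The Hirzebruch–Jung continuants: for `k ≥ 2`, `hjContinuant c k` is the numerator of the
continued fraction `c 1 - 1 / (c 2 - 1 / (⋯ - 1 / c (k - 1)))`. They form the fundamental solution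
of the recurrence `u k + u (k + 2) = c (k + 1) * u (k + 1)`. -/
def hjContinuant (c : ℕ → R) : ℕ → R
  | 0 => 0
  | 1 => 1
  | k + 2 => c (k + 1) * hjContinuant c (k + 1) - hjContinuant c k

variable {c u : ℕ → R} {n k : ℕ}

theorem hjContinuant_add_hjContinuant_add_two (c : ℕ → R) (k : ℕ) :
    hjContinuant c k + hjContinuant c (k + 2) = c (k + 1) * hjContinuant c (k + 1) :=
  add_sub_cancel _ _

theorem hjContinuant_casoratian (hu : ∀ i < n, u i + u (i + 2) = c (i + 1) * u (i + 1))
    (hk : k ≤ n) :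
    hjContinuant c (k + 1) * u k - hjContinuant c k * u (k + 1) = u 0 := by
  induction k with
  | zero => simp [hjContinuant]
  | succ k ih =>
    linear_combination ih (by lia) - hjContinuant c (k + 1) * hu k hk +
      u (k + 1) * hjContinuant_add_hjContinuant_add_two c k

theorem hjContinuant_succ_eq_head (hu : ∀ i < n, u i + u (i + 2) = c (i + 1) * u (i + 1))
    (hun : u n = 1) (hun_succ : u (n + 1) = 0) : hjContinuant c (n + 1) = u 0 := by
  simpa [hun, hun_succ] using hjContinuant_casoratian hu le_rfl

theorem dvd_mul_hjContinuant_sub (hu : ∀ i < n, u i + u (i + 2) = c (i + 1) * u (i + 1))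
    (hk : k ≤ n + 1) : u 0 ∣ u 1 * hjContinuant c k - u k := by
  induction k using Nat.twoStepInduction with
  | zero => simp [hjContinuant]
  | one => simp [hjContinuant]
  | more k ih₀ ih₁ =>
    have hstep : u 1 * hjContinuant c (k + 2) - u (k + 2) =
        c (k + 1) * (u 1 * hjContinuant c (k + 1) - u (k + 1)) -
          (u 1 * hjContinuant c k - u k) := by
      linear_combination u 1 * hjContinuant_add_hjContinuant_add_two c k - hu k (by lia)
    rw [hstep]
    exact ((ih₁ (by lia)).mul_left _).sub (ih₀ (by lia))

theorem isCoprime_of_hj_recurrence (hu : ∀ i < n, u i + u (i + 2) = c (i + 1) * u (i + 1))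
    (hun : u n = 1) : IsCoprime (u 0) (u 1) := by
  obtain ⟨m, hm⟩ := dvd_mul_hjContinuant_sub hu n.le_succ
  exact ⟨-m, hjContinuant c n, by linear_combination hm + hun⟩

theorem strictMonoOn_hjContinuant [LinearOrder R] [IsStrictOrderedRing R]
    (hc : ∀ i < n, 2 ≤ c (i + 1)) : StrictMonoOn (hjContinuant c) (Set.Iic (n + 1)) := by
  have hstep : ∀ k ≤ n, 0 ≤ hjContinuant c k ∧ hjContinuant c k < hjContinuant c (k + 1) := by
    intro k hk
    induction k with
    | zero => simp [hjContinuant]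
    | succ k ih =>
      obtain ⟨hnonneg, hlt⟩ := ih (by lia)
      have hpos := hnonneg.trans_lt hlt
      have hmul := mul_le_mul_of_nonneg_right (hc k hk) hpos.le
      exact ⟨hpos.le, by linarith [hjContinuant_add_hjContinuant_add_two c k]⟩
  refine strictMonoOn_of_lt_add_one Set.ordConnected_Iic fun k _ _ hk ↦ (hstep k ?_).2
  exact Nat.le_of_succ_le_succ hk

end Continuant

theorem eq_of_isLeast_pos_dvd_mul_sub {d q a s t : ℤ} (hdq : IsCoprime d q)
    (ht : IsLeast {x | 0 < x ∧ d ∣ q * x - a} t) (hs : s ∈ Set.Ioo 0 d) (hsa : d ∣ q * s - a) :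
    t = s := by
  obtain ⟨⟨ht_pos, hta⟩, ht_le⟩ := ht
  have hts : t ≤ s := ht_le ⟨hs.1, hsa⟩
  have hdvd : d ∣ q * (s - t) := by simpa [mul_sub] using hsa.sub hta
  have hsub : s - t = 0 := Int.eq_zero_of_dvd_of_nonneg_of_lt (by lia) (by linarith [hs.2])
    (hdq.dvd_of_dvd_mul_left hdvd)
  lia

theorem eq_hjContinuant_of_isLeast {c u : ℕ → ℤ} {n k : ℕ} {t : ℤ}
    (hu : ∀ i < n, u i + u (i + 2) = c (i + 1) * u (i + 1)) (hc : ∀ i < n, 2 ≤ c (i + 1))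
    (hun : u n = 1) (hun_succ : u (n + 1) = 0) (hk_pos : 0 < k) (hkn : k ≤ n)
    (ht : IsLeast {x | 0 < x ∧ u 0 ∣ u 1 * x - u k} t) : t = hjContinuant c k := by
  have hmono := strictMonoOn_hjContinuant hc
  have hk : k ∈ Set.Iic (n + 1) := Set.mem_Iic.2 (by lia)
  refine eq_of_isLeast_pos_dvd_mul_sub (isCoprime_of_hj_recurrence hu hun) ht ⟨?_, ?_⟩
    (dvd_mul_hjContinuant_sub hu hk)
  · exact hmono (Set.mem_Iic.2 (Nat.zero_le _)) hk hk_pos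
  · rw [← hjContinuant_succ_eq_head hu hun hun_succ]
    exact hmono hk Set.self_mem_Iic (Nat.lt_succ_of_le hkn)

/-- **Hirzebruch–Jung data** of `d/q` for coprime `d > q ≥ 1`:
`q_0 = d > q_1 = q > ⋯ > q_n = 1 > q_{n+1} = 0`, `c_i ≥ 2` with
`q_{i-1} = c_i q_i − q_{i+1}`; `q̄_i` is the smallest positive integer with
`q·q̄_i ≡ q_i (mod d)` (and `q̄_0 = 0`, `q̄_{n+1} = d`).

**Statement:** setting `ε_i := (q_i + q̄_i)/d − 1` (so `ε_0 = ε_{n+1} = 0`),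
for every `1 ≤ j ≤ n` one has `ε_{j−1} + ε_{j+1} − c_j·ε_j = c_j − 2`.
(The discrepancy divisor of the Hirzebruch–Jung resolution of `X(d;1,q)` is
`Σ ((q_i + q̄_i)/d − 1)·E_i`.) -/
theorem discrepancy_coefficients
    (n : ℕ) (d q : ℤ) (Q C Qbar : ℕ → ℤ)
    (hn : 1 ≤ n) (hq1 : 1 ≤ q) (hqd : q < d) (hcop : Int.gcd d q = 1)
    (hQ0 : Q 0 = d) (hQ1 : Q 1 = q) (hQn : Q n = 1) (hQtop : Q (n + 1) = 0)
    (hQdec : ∀ i, i ≤ n → Q (i + 1) < Q i)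
    (hC : ∀ i, 1 ≤ i → i ≤ n → Q (i - 1) = C i * Q i - Q (i + 1))
    (hC2 : ∀ i, 1 ≤ i → i ≤ n → 2 ≤ C i)
    (hQbar0 : Qbar 0 = 0) (hQbarTop : Qbar (n + 1) = d)
    (hQbarPos : ∀ i, 1 ≤ i → i ≤ n → 0 < Qbar i)
    (hQbarCong : ∀ i, 1 ≤ i → i ≤ n → d ∣ q * Qbar i - Q i)
    (hQbarMin : ∀ i, 1 ≤ i → i ≤ n → ∀ t : ℤ, 0 < t → d ∣ q * t - Q i → Qbar i ≤ t) :
    ∀ j, 1 ≤ j → j ≤ n →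
      ((((Q (j - 1) : ℚ) + (Qbar (j - 1) : ℚ)) / (d : ℚ) - 1)
        + (((Q (j + 1) : ℚ) + (Qbar (j + 1) : ℚ)) / (d : ℚ) - 1))
        - (C j : ℚ) * (((Q j : ℚ) + (Qbar j : ℚ)) / (d : ℚ) - 1)
      = (C j : ℚ) - 2 := by
  subst hQ0 hQ1
  have hQ : ∀ i < n, Q i + Q (i + 2) = C (i + 1) * Q (i + 1) := fun i hi ↦
    eq_sub_iff_add_eq.1 (hC (i + 1) i.succ_pos hi)
  have hQbar : ∀ i ≤ n + 1, Qbar i = hjContinuant C i := by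
    intro i hi
    obtain rfl | hi_pos := i.eq_zero_or_pos
    · exact hQbar0
    obtain rfl | hin := Nat.le_succ_iff_eq_or_le.1 hi
    · exact hQbarTop.trans (hjContinuant_succ_eq_head hQ hQn hQtop).symm
    exact eq_hjContinuant_of_isLeast hQ (fun k hk ↦ hC2 (k + 1) k.succ_pos hk) hQn hQtop hi_pos hin
      ⟨⟨hQbarPos i hi_pos hin, hQbarCong i hi_pos hin⟩,
        fun t ht ↦ hQbarMin i hi_pos hin t ht.1 ht.2⟩
  rintro (_ | i) hi_pos hin
  · contradiction
  have hQ_rec : (Q i + Q (i + 2) : ℚ) = C (i + 1) * Q (i + 1) := mod_cast hQ i hin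
  have hQbar_rec : (Qbar i + Qbar (i + 2) : ℚ) = C (i + 1) * Qbar (i + 1) := by
    rw [hQbar i (by lia), hQbar (i + 1) (by lia), hQbar (i + 2) (by lia)]
    exact_mod_cast hjContinuant_add_hjContinuant_add_two C i
  rw [Nat.add_sub_cancel]
  linear_combination (hQ_rec + hQbar_rec) / (Q 0 : ℚ)
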